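/- Let 0 < α < 1/2 and let f be smooth on the punctured unit disk with |z|^{2α} f(z) bounded near 0. Then on any relatively compact open U ∋ 0, the equation ∂g/∂z̄ = f has a solution which extends continuously to the origin. -/

import Mathlib

open Complex MeasureTheory Metric Set

/-- The Wirtinger derivative `∂/∂z̄` of a function `f : ℂ → ℂ`. -/
noncomputable def dbar (f : ℂ → ℂ) (z : ℂ) : ℂ :=
  (fderiv ℝ f z 1 + Complex.I * fderiv ℝ f z Complex.I) / 2

open Filter Topology Convolution

lemma fderiv_eq_add (φ : ℂ → ℂ) (w : ℂ) (a b : ℝ) :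
    fderiv ℝ φ w (a + b * I) = a * fderiv ℝ φ w 1 + b * fderiv ℝ φ w I := by
  have h : (a + b * I : ℂ) = a • (1 : ℂ) + b • I := by simp
  rw [h, map_add, map_smul, map_smul]
  simp

lemma integral_Ioi_fderiv_ray {φ : ℂ → ℂ} (hφ : ContDiff ℝ 1 φ) (hc : HasCompactSupport φ)
    {u : ℂ} (hu : ‖u‖ = 1) : ∫ r in Ioi (0 : ℝ), fderiv ℝ φ (r * u) u = -φ 0 := by
  have hiso : Isometry (fun r : ℝ => (r : ℂ) * u) :=
    Isometry.of_dist_eq fun x y => by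
      rw [dist_eq_norm, dist_eq_norm, ← sub_mul, norm_mul, hu, mul_one, ← ofReal_sub, norm_real]
  have hd : ∀ r : ℝ, HasDerivAt (fun r : ℝ => φ (r * u)) (fderiv ℝ φ (r * u) u) r := fun r =>
    (hφ.differentiable one_ne_zero _).hasFDerivAt.comp_hasDerivAt r
      (by simpa using (ofRealCLM.hasDerivAt (x := r)).mul_const u)
  have hcd : ContDiff ℝ 1 (fun r : ℝ => φ (r * u)) :=
    hφ.comp (ofRealCLM.contDiff.mul contDiff_const)
  have := (hc.comp_isClosedEmbedding hiso.isClosedEmbedding).integral_Ioi_deriv_eq hcd 0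
  simpa [Function.comp_def, (hd _).deriv] using this

lemma integral_fderiv_circle {φ : ℂ → ℂ} (hφ : ContDiff ℝ 1 φ) {r : ℝ} (hr : 0 < r) :
    ∫ θ in Ioo (-Real.pi) Real.pi, fderiv ℝ φ (r * exp (θ * I)) (I * exp (θ * I)) = 0 := by
  have hd : ∀ θ : ℝ, HasDerivAt (fun θ : ℝ => φ (r * exp (θ * I)))
      (r * fderiv ℝ φ (r * exp (θ * I)) (I * exp (θ * I))) θ := fun θ => by
    have h1 : HasDerivAt (fun θ : ℝ => (r : ℂ) * exp (θ * I)) (r • (I * exp (θ * I))) θ := by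
      have := (((ofRealCLM.hasDerivAt (x := θ)).mul_const I).cexp).const_mul (r : ℂ)
      rw [ofRealCLM_apply, ofRealCLM_apply, ofReal_one, one_mul, mul_comm (exp _)] at this
      rwa [real_smul]
    have := (hφ.differentiable one_ne_zero _).hasFDerivAt.comp_hasDerivAt θ h1
    rwa [map_smul, real_smul] at this
  have hcont : Continuous fun θ : ℝ => fderiv ℝ φ (r * exp (θ * I)) (I * exp (θ * I)) :=
    ((hφ.continuous_fderiv one_ne_zero).comp (by fun_prop)).clm_apply (by fun_prop)
  have := intervalIntegral.integral_eq_sub_of_hasDerivAt (a := -Real.pi) (b := Real.pi)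
    (fun θ _ => hd θ) ((continuous_const.mul hcont).intervalIntegrable _ _)
  rw [intervalIntegral.integral_const_mul,
    intervalIntegral.integral_of_le (by linarith [Real.pi_pos]),
    integral_Ioc_eq_integral_Ioo] at this
  simpa [hr.ne', exp_neg, exp_pi_mul_I] using this

/-- The Cauchy–Pompeiu formula for compactly supported functions, at the origin. -/
lemma integral_inv_mul_dbar {φ : ℂ → ℂ} (hφ : ContDiff ℝ 1 φ) (hc : HasCompactSupport φ) :
    ∫ w, w⁻¹ * dbar φ w = -(Real.pi * φ 0) := by
  set S := Ioi (0 : ℝ) ×ˢ Ioo (-Real.pi) Real.pi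
  let A : ℝ × ℝ → ℂ := fun p => fderiv ℝ φ (p.1 * exp (p.2 * I)) (exp (p.2 * I))
  let B : ℝ × ℝ → ℂ := fun p => fderiv ℝ φ (p.1 * exp (p.2 * I)) (I * exp (p.2 * I))
  obtain ⟨R, hR⟩ := (hc.fderiv (𝕜 := ℝ)).isCompact.isBounded.subset_closedBall 0
  have hint : ∀ v : ℝ × ℝ → ℂ, Continuous v →
      IntegrableOn (fun p : ℝ × ℝ => fderiv ℝ φ (p.1 * exp (p.2 * I)) (v p)) S := by
    intro v hv
    have hcont : Continuous fun p : ℝ × ℝ => fderiv ℝ φ (p.1 * exp (p.2 * I)) (v p) :=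
      ((hφ.continuous_fderiv one_ne_zero).comp (by fun_prop)).clm_apply hv
    have hK : IsCompact (Icc 0 R ×ˢ Icc (-Real.pi) Real.pi) := isCompact_Icc.prod isCompact_Icc
    refine (hcont.continuousOn.integrableOn_compact hK).of_forall_sdiff_eq_zero
      (measurableSet_Ioi.prod measurableSet_Ioo) ?_
    rintro ⟨r, θ⟩ ⟨⟨hr, hθ⟩, hp⟩
    have hr' : R < r := by
      by_contra! h
      exact hp ⟨⟨le_of_lt hr, h⟩, Ioo_subset_Icc_self hθ⟩
    have : fderiv ℝ φ (r * exp (θ * I)) = 0 := by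
      refine image_eq_zero_of_notMem_tsupport fun h => ?_
      have := hR h
      rw [mem_closedBall_zero_iff, norm_mul, norm_exp_ofReal_mul_I, norm_real, mul_one,
        Real.norm_of_nonneg (le_of_lt hr)] at this
      linarith
    simp [this]
  have hA : IntegrableOn A S := hint _ (by fun_prop)
  have hB : IntegrableOn B S := hint _ (by fun_prop)
  have hAi : ∫ p in S, A p = -(2 * Real.pi * φ 0) := by
    rw [Measure.volume_eq_prod, IntegrableOn, ← Measure.prod_restrict] at *
    rw [integral_prod_symm _ hA]
    simp_rw [A, integral_Ioi_fderiv_ray hφ hc (norm_exp_ofReal_mul_I _)]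
    rw [setIntegral_const, Real.volume_real_Ioo_of_le (by linarith [Real.pi_pos]), real_smul]
    push_cast
    ring
  have hBi : ∫ p in S, B p = 0 := by
    rw [Measure.volume_eq_prod, setIntegral_prod _ (by rwa [← Measure.volume_eq_prod])]
    exact setIntegral_eq_zero_of_forall_eq_zero fun r hr => integral_fderiv_circle hφ hr
  rw [← Complex.integral_comp_polarCoord_symm, polarCoord_target]
  have : ∀ p ∈ S, p.1 • ((Complex.polarCoord.symm p)⁻¹ * dbar φ (Complex.polarCoord.symm p)) =
      (A p + I * B p) / 2 := by
    rintro ⟨r, θ⟩ ⟨hr, -⟩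
    have hr0 : (r : ℂ) ≠ 0 := by exact_mod_cast (ne_of_gt hr)
    have he : exp (θ * I) = Real.cos θ + Real.sin θ * I := by rw [exp_mul_I]; simp
    have he' : I * exp (θ * I) = (-Real.sin θ : ℝ) + Real.cos θ * I := by
      rw [he, ofReal_neg]; linear_combination (Real.sin θ : ℂ) * I_sq
    have hei : (exp (θ * I))⁻¹ = Real.cos θ - Real.sin θ * I := by
      rw [← exp_neg, ← neg_mul, exp_mul_I]; simp; ring
    simp only [A, B, Complex.polarCoord_symm_apply]
    rw [← he, he']
    nth_rw 4 [he]
    rw [fderiv_eq_add, fderiv_eq_add, mul_inv, hei, dbar, real_smul]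
    generalize fderiv ℝ φ (r * exp (θ * I)) = L
    field_simp
    rw [ofReal_neg]
    linear_combination (-(Real.sin θ : ℂ) * L I) * I_sq
  rw [setIntegral_congr_fun (measurableSet_Ioi.prod measurableSet_Ioo) this, integral_div,
    integral_add hA (hB.const_mul I), integral_const_mul, hAi, hBi]
  ring

/-- The Cauchy transform `z ↦ (1/π) ∫ h(w) / (z - w) dw`. -/
noncomputable def cauchyTransform (h : ℂ → ℂ) : ℂ → ℂ :=
  (fun w : ℂ => (Real.pi * w : ℂ)⁻¹) ⋆[ContinuousLinearMap.mul ℝ ℂ, volume] h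

lemma locallyIntegrable_inv_pi_mul :
    LocallyIntegrable (fun w : ℂ => (Real.pi * w : ℂ)⁻¹) := by
  refine locallyIntegrable_of_norm_le_rpow (C := Real.pi⁻¹) (α := 1) (by simp) (by simp) ?_
    (by fun_prop)
  filter_upwards with w
  simp [Real.rpow_neg_one, abs_of_pos Real.pi_pos, mul_comm]

lemma contDiff_cauchyTransform {h : ℂ → ℂ} {n : ℕ∞} (hh : ContDiff ℝ n h)
    (hc : HasCompactSupport h) : ContDiff ℝ n (cauchyTransform h) :=
  hc.contDiff_convolution_right _ locallyIntegrable_inv_pi_mul hh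

/-- The Cauchy transform of a compactly supported function solves the `∂̄`-equation. -/
lemma dbar_cauchyTransform {h : ℂ → ℂ} (hh : ContDiff ℝ 1 h) (hc : HasCompactSupport h) (z : ℂ) :
    dbar (cauchyTransform h) z = h z := by
  have hv : ∀ v, fderiv ℝ (cauchyTransform h) z v =
      ∫ t, (Real.pi * t : ℂ)⁻¹ * fderiv ℝ h (z - t) v := fun v => by
    rw [cauchyTransform,
      (hc.hasFDerivAt_convolution_right _ locallyIntegrable_inv_pi_mul hh z).fderiv,
      convolution_precompR_apply _ locallyIntegrable_inv_pi_mul (hc.fderiv ℝ)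
        (hh.continuous_fderiv one_ne_zero)]
    rfl
  have hi : ∀ v, Integrable fun t => (Real.pi * t : ℂ)⁻¹ * fderiv ℝ h (z - t) v := fun v =>
    (hc.fderiv_apply (𝕜 := ℝ) v).convolutionExists_right (ContinuousLinearMap.mul ℝ ℂ)
      locallyIntegrable_inv_pi_mul
      ((hh.continuous_fderiv one_ne_zero).clm_apply continuous_const) z
  have key := integral_inv_mul_dbar (φ := fun t => h (z - t)) (hh.comp (by fun_prop))
    (hc.comp_homeomorph (Homeomorph.subLeft z))
  have hd : ∀ t, dbar (fun t => h (z - t)) t = -dbar h (z - t) := fun t => by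
    have := ((hh.differentiable one_ne_zero (z - t)).hasFDerivAt.comp t
      ((hasFDerivAt_id t).const_sub z)).fderiv
    rw [Function.comp_def] at this
    simp only [dbar] at this ⊢
    rw [this]
    simp
    ring
  simp only [hd, sub_zero, mul_neg, integral_neg, neg_inj] at key
  have hpi : (Real.pi : ℂ) ≠ 0 := by exact_mod_cast Real.pi_ne_zero
  calc dbar (cauchyTransform h) z
      = ∫ t, (Real.pi : ℂ)⁻¹ * (t⁻¹ * dbar h (z - t)) := by
        rw [dbar, hv, hv, ← integral_const_mul, ← integral_add (hi 1) ((hi I).const_mul I),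
          ← integral_div]
        congr 1 with t
        rw [dbar, mul_inv]
        ring
    _ = h z := by rw [integral_const_mul, key, inv_mul_cancel_left₀ hpi]

/-- The function `‖w‖ ^ (-s)`, cut off at radius `ε`. -/
noncomputable def truncatedRpow (s ε : ℝ) : ℂ → ℝ :=
  (ball (0 : ℂ) ε).indicator fun w => ‖w‖ ^ (-s)

lemma truncatedRpow_nonneg (s ε : ℝ) (w : ℂ) : 0 ≤ truncatedRpow s ε w :=
  indicator_nonneg (fun _ _ => by positivity) _

lemma integrable_truncatedRpow {s : ℝ} (hs : s < 2) (ε : ℝ) :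
    Integrable (truncatedRpow s ε) := by
  refine (integrable_indicator_iff measurableSet_ball).2 ?_
  refine integrableOn_ball_of_norm_le_rpow (C := 1) (α := s) (by simp) (by simpa) ?_
    (measurable_norm.pow_const _).aestronglyMeasurable
  filter_upwards with w
  rw [one_mul, Real.norm_of_nonneg (by positivity)]

lemma tendsto_integral_truncatedRpow {s : ℝ} (hs : s < 2) :
    Tendsto (fun ε => ∫ w, truncatedRpow s ε w) (𝓝[>] 0) (𝓝 0) := by
  have hvol : Tendsto (fun ε : ℝ => volume (ball (0 : ℂ) ε)) (𝓝[>] 0) (𝓝 0) := by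
    have : Continuous fun ε : ℝ => volume (ball (0 : ℂ) ε) := by
      simp_rw [Complex.volume_ball]
      exact ENNReal.continuous_mul_const (by simp) |>.comp
        ((ENNReal.continuous_pow 2).comp ENNReal.continuous_ofReal)
    simpa using (this.tendsto 0).mono_left nhdsWithin_le_nhds
  refine ((integrable_truncatedRpow hs 1).tendsto_setIntegral_nhds_zero hvol).congr' ?_
  filter_upwards [Ioo_mem_nhdsGT one_pos] with ε hε
  rw [← integral_indicator measurableSet_ball]
  simp_rw [truncatedRpow, indicator_indicator, inter_eq_left.2 (ball_subset_ball hε.2.le)]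

section Bound

variable {F : ℂ → ℂ} {M β ε : ℝ}

lemma norm_cauchyKernel_mul_le (hβ : 0 < β) (hM : 0 ≤ M)
    (hF : ∀ w ≠ 0, ‖F w‖ ≤ M * ‖w‖ ^ (-β)) (hsupp : ∀ w, ε ≤ ‖w‖ → F w = 0) {z t : ℂ}
    (htz : t ≠ z) :
    ‖(Real.pi * t : ℂ)⁻¹ * F (z - t)‖ ≤
      M / Real.pi * (truncatedRpow (β + 1) ε t + truncatedRpow (β + 1) ε (z - t)) := by
  have h1 := truncatedRpow_nonneg (β + 1) ε t
  have h2 := truncatedRpow_nonneg (β + 1) ε (z - t)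
  have hpi := Real.pi_pos
  rcases le_or_gt ε ‖z - t‖ with h | h
  · rw [hsupp _ h, mul_zero, norm_zero]
    positivity
  rcases eq_or_ne t 0 with rfl | ht
  · rw [mul_zero, inv_zero, zero_mul, norm_zero]
    positivity
  have ha : 0 < ‖z - t‖ := norm_pos_iff.2 (sub_ne_zero.2 htz.symm)
  have hb : 0 < ‖t‖ := norm_pos_iff.2 ht
  have hsplit : ∀ x : ℝ, 0 < x → x ^ (-(β + 1)) = x⁻¹ * x ^ (-β) := fun x hx => by
    rw [neg_add_rev, Real.rpow_add hx, Real.rpow_neg_one]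
  have hmain : ‖t‖⁻¹ * ‖z - t‖ ^ (-β) ≤
      truncatedRpow (β + 1) ε t + truncatedRpow (β + 1) ε (z - t) := by
    rcases le_or_gt ‖z - t‖ ‖t‖ with hab | hab
    · refine le_trans ?_ (le_add_of_nonneg_left h1)
      rw [truncatedRpow, indicator_of_mem (mem_ball_zero_iff.2 h), hsplit _ ha]
      gcongr
    · refine le_trans ?_ (le_add_of_nonneg_right h2)
      rw [truncatedRpow, indicator_of_mem (mem_ball_zero_iff.2 (hab.trans h)), hsplit _ hb]
      gcongr ?_ * ?_
      exact Real.rpow_le_rpow_of_nonpos hb hab.le (by linarith)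
  calc ‖(Real.pi * t : ℂ)⁻¹ * F (z - t)‖
      = Real.pi⁻¹ * ‖t‖⁻¹ * ‖F (z - t)‖ := by
        rw [norm_mul, norm_inv, norm_mul, norm_real, Real.norm_of_nonneg hpi.le, mul_inv]
    _ ≤ Real.pi⁻¹ * ‖t‖⁻¹ * (M * ‖z - t‖ ^ (-β)) := by
        gcongr
        exact hF _ (sub_ne_zero.2 htz.symm)
    _ = M / Real.pi * (‖t‖⁻¹ * ‖z - t‖ ^ (-β)) := by ring
    _ ≤ _ := by gcongr

lemma integrable_cauchyKernel_mul (hβ : 0 < β) (hβ' : β < 1) (hM : 0 ≤ M) (hFm : Measurable F)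
    (hF : ∀ w ≠ 0, ‖F w‖ ≤ M * ‖w‖ ^ (-β)) (hsupp : ∀ w, ε ≤ ‖w‖ → F w = 0) (z : ℂ) :
    Integrable fun t => (Real.pi * t : ℂ)⁻¹ * F (z - t) := by
  have hq := integrable_truncatedRpow (s := β + 1) (by linarith) ε
  refine ((hq.add (hq.comp_sub_left z)).const_mul (M / Real.pi)).mono'
    (Measurable.aestronglyMeasurable (by fun_prop)) ?_
  filter_upwards [compl_mem_ae_iff.2 (measure_singleton z)] with t ht
  exact norm_cauchyKernel_mul_le hβ hM hF hsupp ht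

lemma norm_cauchyTransform_le (hβ : 0 < β) (hβ' : β < 1) (hM : 0 ≤ M)
    (hF : ∀ w ≠ 0, ‖F w‖ ≤ M * ‖w‖ ^ (-β)) (hsupp : ∀ w, ε ≤ ‖w‖ → F w = 0) (z : ℂ) :
    ‖cauchyTransform F z‖ ≤ 2 * M / Real.pi * ∫ w, truncatedRpow (β + 1) ε w := by
  have hq := integrable_truncatedRpow (s := β + 1) (by linarith) ε
  calc ‖cauchyTransform F z‖
      ≤ ∫ t, M / Real.pi * (truncatedRpow (β + 1) ε t + truncatedRpow (β + 1) ε (z - t)) := by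
        refine norm_integral_le_of_norm_le ((hq.add (hq.comp_sub_left z)).const_mul _) ?_
        filter_upwards [compl_mem_ae_iff.2 (measure_singleton z)] with t ht
        exact norm_cauchyKernel_mul_le hβ hM hF hsupp ht
    _ = _ := by
        rw [integral_const_mul, integral_add hq (hq.comp_sub_left z),
          integral_sub_left_eq_self (truncatedRpow (β + 1) ε)]
        ring

end Bound

/-- A function smooth off the origin and vanishing far away agrees off any neighbourhood of `0`
with a test function. -/
lemma exists_contDiff_eq_off_ball {F : ℂ → ℂ} {R : ℝ} (hF : ContDiffOn ℝ (⊤ : ℕ∞) F {0}ᶜ)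
    (hR : ∀ w, R ≤ ‖w‖ → F w = 0) {ε : ℝ} (hε : 0 < ε) :
    ∃ h : ℂ → ℂ, ContDiff ℝ (⊤ : ℕ∞) h ∧ HasCompactSupport h ∧
      (∀ w, ε ≤ ‖w‖ → h w = F w) ∧ ∀ w, ‖F w - h w‖ ≤ ‖F w‖ := by
  let χ : ContDiffBump (0 : ℂ) := ⟨ε / 2, ε, half_pos hε, half_lt_self hε⟩
  refine ⟨fun w => (1 - χ w : ℝ) * F w, contDiff_iff_contDiffAt.2 fun w => ?_,
    .intro (isCompact_closedBall 0 R) fun w hw => ?_, fun w hw => ?_, fun w => ?_⟩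
  · rcases eq_or_ne w 0 with rfl | hw
    · refine (contDiffAt_const (c := (0 : ℂ))).congr_of_eventuallyEq ?_
      filter_upwards [χ.eventuallyEq_one] with w hw
      simp [hw]
    · exact (ofRealCLM.contDiff.comp (contDiff_const.sub χ.contDiff)).contDiffAt.mul
        (hF.contDiffAt (isOpen_compl_singleton.mem_nhds hw))
  · rw [mem_closedBall_zero_iff, not_le] at hw
    simp [hR w hw.le]
  · simp [χ.zero_of_le_dist (x := w) (by simpa using hw)]
  · have : F w - (1 - χ w : ℝ) * F w = (χ w : ℝ) * F w := by push_cast; ring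
    rw [this, norm_mul, norm_real, Real.norm_of_nonneg χ.nonneg]
    exact mul_le_of_le_one_left (norm_nonneg _) χ.le_one

lemma dbar_add {u v : ℂ → ℂ} {z : ℂ} (hu : DifferentiableAt ℝ u z) (hv : DifferentiableAt ℝ v z) :
    dbar (u + v) z = dbar u z + dbar v z := by
  simp only [dbar, fderiv_add hu hv, add_apply]
  ring

lemma dbar_sub {u v : ℂ → ℂ} {z : ℂ} (hu : DifferentiableAt ℝ u z) (hv : DifferentiableAt ℝ v z) :
    dbar (u - v) z = dbar u z - dbar v z := by
  simp only [dbar, fderiv_sub hu hv, sub_apply]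
  ring

lemma differentiableAt_complex_iff_dbar_eq_zero {u : ℂ → ℂ} {z : ℂ} :
    DifferentiableAt ℂ u z ↔ DifferentiableAt ℝ u z ∧ dbar u z = 0 := by
  rw [differentiableAt_complex_iff_differentiableAt_real, dbar, smul_eq_mul]
  refine and_congr_right fun _ => ⟨fun h => ?_, fun h => ?_⟩
  · rw [h]
    linear_combination (fderiv ℝ u z 1 / 2) * I_sq
  · linear_combination (-2 * I) * h + fderiv ℝ u z I * I_sq

/-- The `∂̄`-equation whose right-hand side is smooth off the origin, vanishes far away and has a
singularity of order less than `1` at the origin. -/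
theorem exists_continuous_dbar_eq {F : ℂ → ℂ} {M β R : ℝ} (hβ : 0 < β) (hβ' : β < 1) (hM : 0 ≤ M)
    (hF : ContDiffOn ℝ (⊤ : ℕ∞) F {0}ᶜ) (hbd : ∀ w ≠ 0, ‖F w‖ ≤ M * ‖w‖ ^ (-β))
    (hR : ∀ w, R ≤ ‖w‖ → F w = 0) :
    ∃ g : ℂ → ℂ, ContDiffOn ℝ (⊤ : ℕ∞) g {0}ᶜ ∧ (∀ z ≠ 0, dbar g z = F z) ∧ Continuous g := by
  have hFm : Measurable F := measurable_of_continuousOn_compl_singleton 0 hF.continuousOn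
  have hex : ∀ ε : ℝ, 0 < ε → _ := fun ε hε => exists_contDiff_eq_off_ball hF hR hε
  choose! h hsm hcs heq hle using hex
  set g := cauchyTransform F
  let G : ℝ → ℂ → ℂ := fun ε => cauchyTransform (h ε)
  have hGs : ∀ ε, 0 < ε → ContDiff ℝ (⊤ : ℕ∞) (G ε) := fun ε hε =>
    contDiff_cauchyTransform (hsm ε hε) (hcs ε hε)
  have hGd : ∀ ε, 0 < ε → ∀ z, dbar (G ε) z = h ε z := fun ε hε =>
    dbar_cauchyTransform ((hsm ε hε).of_le (by exact_mod_cast le_top)) (hcs ε hε)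
  have hdist : ∀ ε, 0 < ε → ∀ z,
      dist (g z) (G ε z) ≤ 2 * M / Real.pi * ∫ w, truncatedRpow (β + 1) ε w := by
    intro ε hε z
    have hsub : g z - G ε z = cauchyTransform (F - h ε) z := by
      have i1 := integrable_cauchyKernel_mul hβ hβ' hM hFm hbd hR z
      have i2 : Integrable fun t => (Real.pi * t : ℂ)⁻¹ * h ε (z - t) :=
        (hcs ε hε).convolutionExists_right (ContinuousLinearMap.mul ℝ ℂ)
          locallyIntegrable_inv_pi_mul (hsm ε hε).continuous z
      refine (integral_sub i1 i2).symm.trans (integral_congr_ae (.of_forall fun t => ?_))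
      exact (mul_sub _ _ _).symm
    rw [dist_eq_norm, hsub]
    exact norm_cauchyTransform_le hβ hβ' hM (fun w hw => (hle ε hε w).trans (hbd w hw))
      (fun w hw => sub_eq_zero.2 (heq ε hε w hw).symm) z
  have hunif : TendstoUniformly G g (𝓝[>] 0) := by
    have hlim := (tendsto_integral_truncatedRpow (s := β + 1) (by linarith)).const_mul
      (2 * M / Real.pi)
    rw [mul_zero] at hlim
    refine tendstoUniformly_iff.2 fun δ hδ => ?_
    filter_upwards [hlim.eventually_lt_const hδ, self_mem_nhdsWithin] with ε hε hε0 z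
    exact (hdist ε hε0 z).trans_lt hε
  have hhol : ∀ ε, 0 < ε → DifferentiableOn ℂ (g - G ε) (closedBall 0 ε)ᶜ := by
    intro ε hε
    have hu : TendstoUniformlyOn (fun δ => G δ - G ε) (g - G ε) (𝓝[>] 0) (closedBall 0 ε)ᶜ := by
      refine tendstoUniformlyOn_iff.2 fun δ hδ => ?_
      filter_upwards [tendstoUniformly_iff.1 hunif δ hδ] with η hη z _
      simpa using hη z
    refine hu.tendstoLocallyUniformlyOn.differentiableOn ?_ isClosed_closedBall.isOpen_compl
    filter_upwards [Ioo_mem_nhdsGT hε] with δ hδ z hz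
    have hz' : ε < ‖z‖ := by simpa using hz
    have d1 : DifferentiableAt ℝ (G δ) z := (hGs δ hδ.1).differentiable (by simp) z
    have d2 : DifferentiableAt ℝ (G ε) z := (hGs ε hε).differentiable (by simp) z
    refine (differentiableAt_complex_iff_dbar_eq_zero.2 ⟨d1.sub d2, ?_⟩).differentiableWithinAt
    rw [dbar_sub d1 d2, hGd δ hδ.1, hGd ε hε, heq δ hδ.1 z (hδ.2.trans hz').le,
      heq ε hε z hz'.le, sub_self]
  have hloc : ∀ z : ℂ, z ≠ 0 → ContDiffAt ℝ (⊤ : ℕ∞) g z ∧ dbar g z = F z := by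
    intro z hz
    have hz' : 0 < ‖z‖ := norm_pos_iff.2 hz
    have hε : 0 < ‖z‖ / 2 := half_pos hz'
    have hmem : (closedBall (0 : ℂ) (‖z‖ / 2))ᶜ ∈ 𝓝 z :=
      isClosed_closedBall.isOpen_compl.mem_nhds (by simpa using hz')
    have hd := hhol _ hε
    have hdz := hd.differentiableAt hmem
    have hsplit : g = (g - G (‖z‖ / 2)) + G (‖z‖ / 2) := (sub_add_cancel _ _).symm
    constructor
    · rw [hsplit]
      exact (((hd.contDiffOn isClosed_closedBall.isOpen_compl).contDiffAt hmem).restrict_scalars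
        ℝ).add (hGs _ hε).contDiffAt
    · obtain ⟨hr, h0⟩ := differentiableAt_complex_iff_dbar_eq_zero.1 hdz
      rw [hsplit, dbar_add hr ((hGs _ hε).differentiable (by simp) z), h0, zero_add, hGd _ hε,
        heq _ hε z (half_le_self hz'.le)]
  refine ⟨g, fun z hz => (hloc z hz).1.contDiffWithinAt, fun z hz => (hloc z hz).2, ?_⟩
  refine hunif.continuous (Eventually.frequently ?_)
  filter_upwards [self_mem_nhdsWithin] with ε hε using (hGs ε hε).continuous

/-- For `0 < α < 1/2` and `f` smooth on the punctured unit disk with `|z|^(2α) f(z)` bounded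
near `0`, on any relatively compact open `U ∋ 0` the equation `∂g/∂z̄ = f` has a solution
which extends continuously to the origin. -/
theorem dbar_lemma_small_alpha (α : ℝ) (hα1 : 0 < α) (hα2 : α < 1 / 2)
    (f : ℂ → ℂ) (hf : ContDiffOn ℝ (⊤ : ℕ∞) f (ball (0 : ℂ) 1 \ {0}))
    (C r : ℝ) (hr : 0 < r)
    (hbd : ∀ z : ℂ, 0 < ‖z‖ → ‖z‖ < r → ‖z‖ ^ (2 * α) * ‖f z‖ ≤ C)
    (U : Set ℂ) (hU : IsOpen U) (h0U : (0 : ℂ) ∈ U)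
    (hUsub : closure U ⊆ ball (0 : ℂ) 1) (hUcpt : IsCompact (closure U)) :
    ∃ g : ℂ → ℂ,
      ContDiffOn ℝ (⊤ : ℕ∞) g (U \ {0}) ∧
      (∀ z ∈ U \ {0}, dbar g z = f z) ∧
      ContinuousOn g U := by
  obtain ⟨ρ, hρ1, hUρ⟩ := exists_lt_subset_ball isClosed_closure hUsub
  have hρ0 : 0 < ρ := by simpa using hUρ (subset_closure h0U)
  let χ : ContDiffBump (0 : ℂ) := ⟨ρ, (ρ + 1) / 2, hρ0, by linarith⟩
  have hout : χ.rOut < 1 := show (ρ + 1) / 2 < 1 by linarith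
  let F : ℂ → ℂ := fun w => χ w * f w
  have hFzero : ∀ w, χ.rOut ≤ ‖w‖ → F w = 0 := fun w hw => by
    simp [F, χ.zero_of_le_dist (x := w) (by simpa using hw)]
  have hopen : IsOpen (ball (0 : ℂ) 1 \ {0}) := isOpen_ball.sdiff isClosed_singleton
  have hFs : ContDiffOn ℝ (⊤ : ℕ∞) F {0}ᶜ := by
    intro w hw
    refine ContDiffAt.contDiffWithinAt ?_
    rcases lt_or_ge ‖w‖ 1 with h1 | h1
    · exact (ofRealCLM.contDiff.comp χ.contDiff).contDiffAt.mul
        (hf.contDiffAt (hopen.mem_nhds ⟨by simpa using h1, hw⟩))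
    · refine (contDiffAt_const (c := (0 : ℂ))).congr_of_eventuallyEq ?_
      filter_upwards [continuous_norm.continuousAt.eventually_const_lt (hout.trans_le h1)] with v hv
      exact hFzero v hv.le
  obtain ⟨M, hM⟩ : ∃ M, ∀ w ∈ closedBall (0 : ℂ) χ.rOut \ ball 0 r, ‖w‖ ^ (2 * α) * ‖f w‖ ≤ M := by
    have hK : IsCompact (closedBall (0 : ℂ) χ.rOut \ ball 0 r) :=
      (isCompact_closedBall _ _).diff isOpen_ball
    have hcont : ContinuousOn (fun w : ℂ => ‖w‖ ^ (2 * α) * ‖f w‖)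
        (closedBall (0 : ℂ) χ.rOut \ ball 0 r) := by
      refine ContinuousOn.mul
        ((continuous_norm.rpow_const fun _ => Or.inr (by linarith)).continuousOn)
        (hf.continuousOn.mono ?_).norm
      rintro w ⟨hw, hw'⟩
      refine ⟨closedBall_subset_ball hout hw, ?_⟩
      rintro rfl
      exact hw' (mem_ball_self hr)
    obtain ⟨M, hM⟩ := hK.bddAbove_image hcont
    exact ⟨M, fun w hw => hM (mem_image_of_mem _ hw)⟩
  have hbdF : ∀ w ≠ 0, ‖F w‖ ≤ max 0 (max C M) * ‖w‖ ^ (-(2 * α)) := by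
    intro w hw
    have hw0 : 0 < ‖w‖ := norm_pos_iff.2 hw
    rcases le_or_gt χ.rOut ‖w‖ with h1 | h1
    · rw [hFzero w h1, norm_zero]
      positivity
    have hfw : ‖w‖ ^ (2 * α) * ‖f w‖ ≤ max 0 (max C M) := by
      rcases lt_or_ge ‖w‖ r with h2 | h2
      · exact (hbd w hw0 h2).trans ((le_max_left _ _).trans (le_max_right _ _))
      · exact (hM w ⟨by simpa using h1.le, by simpa using h2⟩).trans
          ((le_max_right _ _).trans (le_max_right _ _))
    rw [Real.rpow_neg hw0.le, ← div_eq_mul_inv, le_div_iff₀ (by positivity), mul_comm]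
    refine le_trans ?_ hfw
    gcongr
    rw [norm_mul, norm_real, Real.norm_of_nonneg χ.nonneg]
    exact mul_le_of_le_one_left (norm_nonneg _) χ.le_one
  obtain ⟨g, hg, hdg, hgc⟩ := exists_continuous_dbar_eq (by linarith) (by linarith)
    (le_max_left _ _) hFs hbdF hFzero
  refine ⟨g, hg.mono fun z hz => hz.2, fun z hz => ?_, hgc.continuousOn⟩
  have hzχ : χ z = 1 :=
    χ.one_of_mem_closedBall (ball_subset_closedBall (hUρ (subset_closure hz.1)))
  rw [hdg z hz.2]
  simp [F, hzχ]
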